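/- Let x : ℝ → ℝ² be a C^∞ curve parametrized by affine arc length with affine curvature k, and fix s₀ ∈ ℝ. For s near s₀ with s ≠ s₀, let T(s₀, s) := (1/2) · ω(x'(s), x(s) − x(s₀)) · ω(x'(s₀), x(s₀) − x(s)) / ω(x'(s₀), x'(s)) (the area of the triangle with vertices x(s₀), x(s) and the intersection point of the tangent lines to the curve at x(s₀) and x(s)). Then T(s₀, s) = (s − s₀)³/8 + (3·k(s₀)²/5760)·(s − s₀)⁷ + o((s − s₀)⁷) as s → s₀⁺. -/

import Mathlib

open Filter
open scoped Topology

/-- The standard area form on the plane: `ω(u,v) = u₁v₂ − u₂v₁`. -/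
noncomputable def om (u v : ℝ × ℝ) : ℝ := u.1 * v.2 - u.2 * v.1

/-!
Put `t = s - s₀`, `b = ω(x'(s₀), x'(s))`, `B = ω(x'(s₀), x(s) - x(s₀))` and
`P = ω(x(s) - x(s₀), x'(s))`, so that the area is `P B / (2 b)`. Differentiating `ω(x', x'') = 1`
gives `x''' = -k x'`, hence `b'' = -k b`, `B' = b` and `P'' = 1 - k P`. A polynomial in `t` which
satisfies such an equation up to `o(t ^ n)`, with the right initial values, agrees with the solution
up to `o(t ^ (n + 2))`; this gives `b` to order `5` and `B`, `P` to order `6` from the second order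
expansion of `k` alone. In the quotient the first and second derivatives of `k` cancel.
-/

open Asymptotics Polynomial

section Asymptotics

variable {E : Type*} [NormedAddCommGroup E] [NormedSpace ℝ E] {s₀ : ℝ} {n : ℕ}

theorem isLittleO_sub_pow_of_lt {m : ℕ} (h : n < m) :
    (fun s : ℝ => (s - s₀) ^ m) =o[𝓝 s₀] fun s => (s - s₀) ^ n :=
  (isLittleO_pow_pow h).comp_tendsto (tendsto_sub_nhds_zero_iff.2 tendsto_id)

theorem isBigO_sub_pow_of_le {m : ℕ} (h : n ≤ m) :
    (fun s : ℝ => (s - s₀) ^ m) =O[𝓝 s₀] fun s => (s - s₀) ^ n := by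
  obtain rfl | hlt := h.eq_or_lt
  · exact isBigO_refl _ _
  · exact (isLittleO_sub_pow_of_lt hlt).isBigO

theorem isLittleO_sub_pow_succ_of_hasDerivAt {f f' : ℝ → E} (hf : ∀ s, HasDerivAt f (f' s) s)
    (h₀ : f s₀ = 0) (h : f' =o[𝓝 s₀] fun s => (s - s₀) ^ n) :
    f =o[𝓝 s₀] fun s => (s - s₀) ^ (n + 1) := by
  rw [← nhdsWithin_univ] at h ⊢
  simpa only [h₀, sub_zero] using convex_univ.isLittleO_pow_succ_real (Set.mem_univ s₀)
    (fun s _ => (hf s).hasDerivWithinAt) h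

theorem isLittleO_sub_pow_of_hill {r r' r'' : ℝ → E} {k : ℝ → ℝ}
    (hr : ∀ s, HasDerivAt r (r' s) s) (hr' : ∀ s, HasDerivAt r' (r'' s) s)
    (h₀ : r s₀ = 0) (h₀' : r' s₀ = 0) (hk : k =O[𝓝 s₀] fun _ => (1 : ℝ))
    (h : (fun s => r'' s + k s • r s) =o[𝓝 s₀] fun s => (s - s₀) ^ n) :
    r =o[𝓝 s₀] fun s => (s - s₀) ^ (n + 2) := by
  have integrate {m : ℕ} (hm : r'' =o[𝓝 s₀] fun s => (s - s₀) ^ m) :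
      r =o[𝓝 s₀] fun s => (s - s₀) ^ (m + 2) :=
    isLittleO_sub_pow_succ_of_hasDerivAt hr h₀ (isLittleO_sub_pow_succ_of_hasDerivAt hr' h₀' hm)
  have second_deriv {m : ℕ} (hmn : m ≤ n) (hm : r =o[𝓝 s₀] fun s => (s - s₀) ^ m) :
      r'' =o[𝓝 s₀] fun s => (s - s₀) ^ m := by
    have hkr : (fun s => k s • r s) =o[𝓝 s₀] fun s => (s - s₀) ^ m := by
      simpa only [one_smul] using hk.smul_isLittleO hm
    simpa only [add_sub_cancel_right] using (h.trans_isBigO (isBigO_sub_pow_of_le hmn)).sub hkr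
  -- Each bound `r'' = o((s - s₀) ^ m)` gains two orders for `r`, hence for `k • r`.
  suffices ∀ m ≤ n, r'' =o[𝓝 s₀] fun s => (s - s₀) ^ m from integrate (this n le_rfl)
  intro m
  induction m with
  | zero =>
    refine fun hn => second_deriv hn ?_
    simpa only [pow_zero, isLittleO_one_iff, h₀] using (hr s₀).continuousAt.tendsto
  | succ m ih =>
    exact fun hn => second_deriv hn
      ((integrate (ih (by lia))).trans_isBigO (isBigO_sub_pow_of_le (by lia)))

end Asymptotics

/-- The polynomial `φ`, in the variable `s - s₀`, is an asymptotic expansion of `f` at `s₀` up to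
`o((s - s₀) ^ n)`. The degree of `φ` is not restricted, so `φ` is unique only modulo
`X ^ (n + 1)`. -/
def HasExpansionAt (f : ℝ → ℝ) (φ : ℝ[X]) (s₀ : ℝ) (n : ℕ) : Prop :=
  (fun s => f s - φ.eval (s - s₀)) =o[𝓝 s₀] fun s => (s - s₀) ^ n

theorem isBigO_eval_sub_of_X_pow_dvd {φ : ℝ[X]} {n : ℕ} (h : X ^ n ∣ φ) (s₀ : ℝ) :
    (fun s => φ.eval (s - s₀)) =O[𝓝 s₀] fun s => (s - s₀) ^ n := by
  obtain ⟨ψ, rfl⟩ := h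
  have hψ : (fun s => ψ.eval (s - s₀)) =O[𝓝 s₀] fun _ => (1 : ℝ) :=
    (ψ.continuous.comp (continuous_sub_right s₀)).continuousAt.norm.isBoundedUnder_le.isBigO_one ℝ
  simpa only [eval_mul, eval_pow, eval_X, mul_one] using
    (isBigO_refl (fun s : ℝ => (s - s₀) ^ n) (𝓝 s₀)).mul hψ

theorem isLittleO_eval_sub_of_X_pow_succ_dvd {φ : ℝ[X]} {n : ℕ} (h : X ^ (n + 1) ∣ φ) (s₀ : ℝ) :
    (fun s => φ.eval (s - s₀)) =o[𝓝 s₀] fun s => (s - s₀) ^ n :=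
  (isBigO_eval_sub_of_X_pow_dvd h s₀).trans_isLittleO (isLittleO_sub_pow_of_lt n.lt_succ_self)

theorem hasDerivAt_eval_sub (φ : ℝ[X]) (s₀ s : ℝ) :
    HasDerivAt (fun t => φ.eval (t - s₀)) (φ.derivative.eval (s - s₀)) s :=
  (φ.hasDerivAt (s - s₀)).comp_sub_const s s₀

namespace HasExpansionAt

variable {f g : ℝ → ℝ} {φ ψ τ : ℝ[X]} {s₀ : ℝ} {i j m n : ℕ}

theorem polynomial_eval (φ : ℝ[X]) (s₀ : ℝ) (n : ℕ) :
    HasExpansionAt (fun s => φ.eval (s - s₀)) φ s₀ n := by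
  simpa only [HasExpansionAt, sub_self] using isLittleO_zero _ _

theorem of_le (hf : HasExpansionAt f φ s₀ m) (h : n ≤ m) : HasExpansionAt f φ s₀ n :=
  hf.trans_isBigO (isBigO_sub_pow_of_le h)

theorem congr_mod_X_pow (hf : HasExpansionAt f φ s₀ n) (h : X ^ (n + 1) ∣ φ - ψ) :
    HasExpansionAt f ψ s₀ n := by
  simpa only [HasExpansionAt, eval_sub, sub_add_sub_cancel] using
    hf.add (isLittleO_eval_sub_of_X_pow_succ_dvd h s₀)

theorem isBigO_sub_pow (hf : HasExpansionAt f φ s₀ n) (h : X ^ n ∣ φ) :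
    f =O[𝓝 s₀] fun s => (s - s₀) ^ n := by
  simpa only [sub_add_cancel] using hf.isBigO.add (isBigO_eval_sub_of_X_pow_dvd h s₀)

theorem const_mul (c : ℝ) (hf : HasExpansionAt f φ s₀ n) :
    HasExpansionAt (fun s => c * f s) (C c * φ) s₀ n := by
  simpa only [HasExpansionAt, eval_mul, eval_C, mul_sub] using hf.const_mul_left c

theorem sub (hf : HasExpansionAt f φ s₀ n) (hg : HasExpansionAt g ψ s₀ n) :
    HasExpansionAt (fun s => f s - g s) (φ - ψ) s₀ n := by
  simpa only [HasExpansionAt, eval_sub, sub_sub_sub_comm] using IsLittleO.sub hf hg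

theorem mul (hf : HasExpansionAt f φ s₀ (i + n)) (hφ : X ^ i ∣ φ)
    (hg : HasExpansionAt g ψ s₀ (j + n)) (hψ : X ^ j ∣ ψ) :
    HasExpansionAt (fun s => f s * g s) (φ * ψ) s₀ (i + j + n) := by
  have hfg := IsLittleO.mul_isBigO hf ((hg.of_le le_self_add).isBigO_sub_pow hψ)
  have hφg := (isBigO_eval_sub_of_X_pow_dvd hφ s₀).mul_isLittleO hg
  refine ((hfg.congr_right fun s => ?_).add (hφg.congr_right fun s => ?_)).congr_left fun s => ?_
  · ring
  · ring
  · rw [eval_mul]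
    ring

theorem isEquivalent (hf : HasExpansionAt f (X ^ n * φ) s₀ n) (hφ : φ.eval 0 ≠ 0) :
    f ~[𝓝 s₀] fun s => φ.eval 0 * (s - s₀) ^ n := by
  have hlead : HasExpansionAt f (X ^ n * C (φ.eval 0)) s₀ n :=
    hf.congr_mod_X_pow <| by
      rw [← mul_sub, pow_succ]
      exact mul_dvd_mul_left _ (by simpa using X_sub_C_dvd_sub_C_eval (a := (0 : ℝ)) (p := φ))
  rw [IsEquivalent, isLittleO_const_mul_right_iff hφ]
  refine hlead.congr_left fun s => ?_
  simp only [eval_mul, eval_pow, eval_X, eval_C, Pi.sub_apply, mul_comm]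

theorem div_sub_isLittleO (hf : HasExpansionAt f φ s₀ (i + j + n))
    (hg : HasExpansionAt g (X ^ i * ψ) s₀ (i + n)) (hψ : ψ.eval 0 ≠ 0) (hτ : X ^ j ∣ τ)
    (h : X ^ (i + j + n + 1) ∣ φ - X ^ i * ψ * τ) :
    (fun s => f s / g s - τ.eval (s - s₀)) =o[𝓝[≠] s₀] fun s => (s - s₀) ^ (j + n) := by
  have hequiv := ((hg.of_le le_self_add).isEquivalent hψ).mono (nhdsWithin_le_nhds (s := {s₀}ᶜ))
  have hne : ∀ᶠ s in 𝓝[≠] s₀, s - s₀ ≠ 0 :=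
    eventually_mem_nhdsWithin.mono fun s hs => sub_ne_zero.2 hs
  have hpow : (fun s => (s - s₀) ^ i) =O[𝓝[≠] s₀] g :=
    (isBigO_const_mul_left_iff hψ).1 hequiv.isBigO_symm
  have hinv : (fun s => (g s)⁻¹) =O[𝓝[≠] s₀] fun s => ((s - s₀) ^ i)⁻¹ :=
    hpow.inv_rev (hne.mono fun s hs h0 => absurd h0 (pow_ne_zero i hs))
  have hg0 : ∀ᶠ s in 𝓝[≠] s₀, g s ≠ 0 := by
    filter_upwards [hpow.eq_zero_imp, hne] with s hs hs0 hgs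
    exact pow_ne_zero i hs0 (hs hgs)
  have hnum : HasExpansionAt (fun s => f s - g s * τ.eval (s - s₀)) 0 s₀ (i + j + n) :=
    (hf.sub (hg.mul (dvd_mul_right _ _) (polynomial_eval τ s₀ (j + n)) hτ)).congr_mod_X_pow
      (by rwa [sub_zero])
  simp only [HasExpansionAt, eval_zero, sub_zero] at hnum
  refine ((hnum.mono nhdsWithin_le_nhds).mul_isBigO hinv).congr' ?_ ?_
  · filter_upwards [hg0] with s hs
    field_simp
  · filter_upwards [hne] with s hs
    field_simp
    ring

theorem of_hasDerivAt {f' : ℝ → ℝ} (hf : ∀ s, HasDerivAt f (f' s) s)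
    (h₀ : f s₀ = φ.eval 0) (h : HasExpansionAt f' φ.derivative s₀ n) :
    HasExpansionAt f φ s₀ (n + 1) :=
  isLittleO_sub_pow_succ_of_hasDerivAt (fun s => (hf s).sub (hasDerivAt_eval_sub φ s₀ s))
    (by simp only [h₀, sub_self]) h

theorem of_hill {f' k : ℝ → ℝ} {κ χ : ℝ[X]} (hf : ∀ s, HasDerivAt f (f' s) s)
    (hf' : ∀ s, HasDerivAt f' (χ.eval (s - s₀) - k s * f s) s)
    (hk : HasExpansionAt k κ s₀ m) (hφ : X ^ j ∣ φ)
    (h₀ : f s₀ = φ.eval 0) (h₀' : f' s₀ = φ.derivative.eval 0)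
    (hode : X ^ (m + j + 1) ∣ χ - κ * φ - φ.derivative.derivative) :
    HasExpansionAt f φ s₀ (m + j + 2) := by
  refine isLittleO_sub_pow_of_hill (k := k) (fun s => (hf s).sub (hasDerivAt_eval_sub φ s₀ s))
    (fun s => (hf' s).sub (hasDerivAt_eval_sub φ.derivative s₀ s))
    (by simp only [h₀, sub_self]) (by simp only [h₀', sub_self]) ?_ ?_
  · simpa only [pow_zero] using (hk.of_le m.zero_le).isBigO_sub_pow (one_dvd κ)
  · refine ((isLittleO_eval_sub_of_X_pow_succ_dvd hode s₀).sub
      (IsLittleO.mul_isBigO hk (isBigO_eval_sub_of_X_pow_dvd hφ s₀) |>.congr_right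
        fun s => (pow_add _ m j).symm)).congr_left fun s => ?_
    simp only [eval_sub, eval_mul, smul_eq_mul]
    ring

theorem of_contDiff (hf : ContDiff ℝ n f) (s₀ : ℝ) :
    HasExpansionAt f (∑ i ∈ Finset.range (n + 1), C (iteratedDeriv i f s₀ / i.factorial) * X ^ i)
      s₀ n := by
  refine (taylor_isLittleO_univ hf).congr_left fun s => ?_
  simp only [taylor_within_apply, iteratedDerivWithin_univ, eval_finsetSum, eval_mul, eval_pow,
    eval_C, eval_X, smul_eq_mul]
  congr! 2 with i
  ring

end HasExpansionAt

section AreaForm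

theorem om_self (u : ℝ × ℝ) : om u u = 0 := by
  simp only [om]
  ring

theorem om_zero_left (u : ℝ × ℝ) : om 0 u = 0 := by
  simp only [om, Prod.fst_zero, Prod.snd_zero, zero_mul, sub_zero]

theorem om_zero_right (u : ℝ × ℝ) : om u 0 = 0 := by
  simp only [om, Prod.fst_zero, Prod.snd_zero, mul_zero, sub_zero]

theorem om_smul_right (c : ℝ) (u v : ℝ × ℝ) : om u (c • v) = c * om u v := by
  simp only [om, Prod.smul_fst, Prod.smul_snd, smul_eq_mul]
  ring

theorem neg_om (u v : ℝ × ℝ) : -om u v = om v u := by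
  simp only [om]
  ring

theorem neg_om_sub_right (u p q : ℝ × ℝ) : -om u (p - q) = om u (q - p) := by
  simp only [om, Prod.fst_sub, Prod.snd_sub]
  ring

theorem om_smul_cramer (u v w : ℝ × ℝ) : om u v • w = om w v • u + om u w • v := by
  ext <;> simp only [om, Prod.fst_add, Prod.snd_add, Prod.smul_fst, Prod.smul_snd, smul_eq_mul] <;>
    ring

theorem hasDerivAt_om {u v : ℝ → ℝ × ℝ} {u' v' : ℝ × ℝ} {s : ℝ}
    (hu : HasDerivAt u u' s) (hv : HasDerivAt v v' s) :
    HasDerivAt (fun t => om (u t) (v t)) (om u' (v s) + om (u s) v') s := by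
  have hfst {w : ℝ → ℝ × ℝ} {w' : ℝ × ℝ} (hw : HasDerivAt w w' s) :
      HasDerivAt (fun t => (w t).1) w'.1 s :=
    (ContinuousLinearMap.fst ℝ ℝ ℝ).hasFDerivAt.comp_hasDerivAt s hw
  have hsnd {w : ℝ → ℝ × ℝ} {w' : ℝ × ℝ} (hw : HasDerivAt w w' s) :
      HasDerivAt (fun t => (w t).2) w'.2 s :=
    (ContinuousLinearMap.snd ℝ ℝ ℝ).hasFDerivAt.comp_hasDerivAt s hw
  refine (((hfst hu).mul (hsnd hv)).sub ((hsnd hu).mul (hfst hv))).congr_deriv ?_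
  simp only [om]
  ring

theorem hasDerivAt_om_const_left (u : ℝ × ℝ) {v : ℝ → ℝ × ℝ} {v' : ℝ × ℝ} {s : ℝ}
    (hv : HasDerivAt v v' s) : HasDerivAt (fun t => om u (v t)) (om u v') s := by
  simpa only [om_zero_left, zero_add] using hasDerivAt_om (hasDerivAt_const s u) hv

end AreaForm

/-- The Frenet equations `x' = v`, `v' = a`, `a' = -k v`, `ω(v, a) = 1` of a plane curve `x`
parametrized by affine arc length, with affine tangent `v`, affine normal `a` and affine
curvature `k`. -/
structure IsAffineFrenet (x v a : ℝ → ℝ × ℝ) (k : ℝ → ℝ) : Prop where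
  hasDerivAt_curve : ∀ s, HasDerivAt x (v s) s
  hasDerivAt_tangent : ∀ s, HasDerivAt v (a s) s
  hasDerivAt_normal : ∀ s, HasDerivAt a (-k s • v s) s
  om_tangent_normal : ∀ s, om (v s) (a s) = 1

theorem isAffineFrenet_of_om_eq_one {x : ℝ → ℝ × ℝ} (hx : ContDiff ℝ 3 x)
    (haff : ∀ s, om (deriv x s) (iteratedDeriv 2 x s) = 1) :
    IsAffineFrenet x (deriv x) (iteratedDeriv 2 x)
      (fun s => om (iteratedDeriv 2 x s) (iteratedDeriv 3 x s)) := by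
  have hiter (i : ℕ) (hi : i < 3) (s : ℝ) :
      HasDerivAt (iteratedDeriv i x) (iteratedDeriv (i + 1) x s) s := by
    rw [iteratedDeriv_succ]
    exact (hx.differentiable_iteratedDeriv i (by exact_mod_cast hi) s).hasDerivAt
  have h₁ (s : ℝ) : HasDerivAt (deriv x) (iteratedDeriv 2 x s) s := by
    simpa only [iteratedDeriv_one] using hiter 1 (by lia) s
  have h₂ (s : ℝ) : HasDerivAt (iteratedDeriv 2 x) (iteratedDeriv 3 x s) s := hiter 2 (by lia) s
  have horth (s : ℝ) : om (deriv x s) (iteratedDeriv 3 x s) = 0 := by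
    have hconst := hasDerivAt_om (h₁ s) (h₂ s)
    simp only [haff, om_self, zero_add] at hconst
    exact hconst.unique (hasDerivAt_const s 1)
  refine ⟨fun s => (hx.differentiable (by norm_num) s).hasDerivAt, h₁, fun s => ?_, haff⟩
  have hcramer := om_smul_cramer (deriv x s) (iteratedDeriv 2 x s) (iteratedDeriv 3 x s)
  rw [haff, horth, one_smul, zero_smul, add_zero, ← neg_om] at hcramer
  exact hcramer ▸ h₂ s

theorem contDiff_affineCurvature {x : ℝ → ℝ × ℝ} {n : ℕ} (hx : ContDiff ℝ (n + 3 : ℕ) x) :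
    ContDiff ℝ n (fun s => om (iteratedDeriv 2 x s) (iteratedDeriv 3 x s)) := by
  have h₂ : ContDiff ℝ n (iteratedDeriv 2 x) := by
    rw [iteratedDeriv_eq_iterate]
    exact (hx.of_le (by norm_cast; lia)).iterate_deriv' n 2
  have h₃ : ContDiff ℝ n (iteratedDeriv 3 x) := by
    rw [iteratedDeriv_eq_iterate]
    exact (hx.of_le (by norm_cast)).iterate_deriv' n 3
  exact (h₂.fst.mul h₃.snd).sub (h₂.snd.mul h₃.fst)

section Expansions

variable (k₀ k₁ k₂ : ℝ)

/-- The second order expansion of the affine curvature at the base point, so that `k₁` and `k₂`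
stand for `k'(s₀)` and `k''(s₀) / 2`. -/
noncomputable def curvaturePoly : ℝ[X] := C k₀ + C k₁ * X + C k₂ * X ^ 2

/-- The expansion of `ω(x'(s₀), x'(s))` for an affine curvature with expansion
`curvaturePoly k₀ k₁ k₂`. The factor `X ^ 1` displays the order of vanishing, as in the
expansions below. -/
noncomputable def tangentTangentPoly : ℝ[X] :=
  X ^ 1 * (1 - C (k₀ / 6) * X ^ 2 - C (k₁ / 12) * X ^ 3 + C ((k₀ ^ 2 / 6 - k₂) / 20) * X ^ 4)

/-- The expansion of `ω(x'(s₀), x(s) - x(s₀))` for an affine curvature with expansion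
`curvaturePoly k₀ k₁ k₂`. -/
noncomputable def tangentChordPoly : ℝ[X] :=
  X ^ 2 * (C (1 / 2) - C (k₀ / 24) * X ^ 2 - C (k₁ / 60) * X ^ 3
    + C ((k₀ ^ 2 / 6 - k₂) / 120) * X ^ 4)

/-- The expansion of `ω(x(s) - x(s₀), x'(s))` for an affine curvature with expansion
`curvaturePoly k₀ k₁ k₂`. -/
noncomputable def chordTangentPoly : ℝ[X] :=
  X ^ 2 * (C (1 / 2) - C (k₀ / 24) * X ^ 2 - C (k₁ / 40) * X ^ 3
    + C ((k₀ ^ 2 / 24 - k₂ / 2) / 30) * X ^ 4)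

/-- The expansion of the area of the triangle bounded by the chord from `x(s₀)` to `x(s)` and the
tangent lines at its endpoints. -/
noncomputable def tangentTrianglePoly : ℝ[X] :=
  X ^ 3 * (C (1 / 8) + C (3 * k₀ ^ 2 / 5760) * X ^ 4)

theorem hasExpansionAt_curvaturePoly {k : ℝ → ℝ} (hk : ContDiff ℝ 2 k) (s₀ : ℝ) :
    HasExpansionAt k (curvaturePoly (k s₀) (deriv k s₀) (iteratedDeriv 2 k s₀ / 2)) s₀ 2 := by
  simpa [curvaturePoly, Finset.sum_range_succ] using HasExpansionAt.of_contDiff (n := 2) hk s₀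

theorem derivative_tangentChordPoly :
    (tangentChordPoly k₀ k₁ k₂).derivative = tangentTangentPoly k₀ k₁ k₂ := by
  refine Polynomial.funext fun t => ?_
  simp only [tangentChordPoly, tangentTangentPoly, derivative_add, derivative_sub, derivative_mul,
    derivative_C, derivative_X_pow, eval_add, eval_sub, eval_mul, eval_pow, eval_X, eval_C,
    eval_zero, eval_one]
  ring

theorem X_pow_dvd_hill_tangentTangentPoly :
    X ^ 4 ∣ 0 - curvaturePoly k₀ k₁ k₂ * tangentTangentPoly k₀ k₁ k₂
      - (tangentTangentPoly k₀ k₁ k₂).derivative.derivative := by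
  let d := (k₀ ^ 2 / 6 - k₂) / 20
  refine ⟨C (k₀ * k₁ / 4) + C (k₀ * k₂ / 6 + k₁ ^ 2 / 12 - k₀ * d) * X
    + C (k₁ * k₂ / 12 - k₁ * d) * X ^ 2 - C (k₂ * d) * X ^ 3, Polynomial.funext fun t => ?_⟩
  simp only [curvaturePoly, tangentTangentPoly, derivative_add, derivative_sub, derivative_mul,
    derivative_C, derivative_X_pow, derivative_one, derivative_zero, eval_add, eval_sub, eval_mul,
    eval_pow, eval_X, eval_C, eval_zero, eval_one, Nat.cast_ofNat, d]
  ring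

theorem X_pow_dvd_hill_chordTangentPoly :
    X ^ 5 ∣ 1 - curvaturePoly k₀ k₁ k₂ * chordTangentPoly k₀ k₁ k₂
      - (chordTangentPoly k₀ k₁ k₂).derivative.derivative := by
  let d := (k₀ ^ 2 / 24 - k₂ / 2) / 30
  refine ⟨C (k₀ * k₁ / 15) + C (k₀ * k₂ / 24 + k₁ ^ 2 / 40 - k₀ * d) * X
    + C (k₁ * k₂ / 40 - k₁ * d) * X ^ 2 - C (k₂ * d) * X ^ 3, Polynomial.funext fun t => ?_⟩
  simp only [curvaturePoly, chordTangentPoly, derivative_add, derivative_sub, derivative_mul,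
    derivative_C, derivative_X_pow, derivative_zero, eval_add, eval_sub, eval_mul, eval_pow, eval_X,
    eval_C, eval_zero, eval_one, Nat.cast_ofNat, d]
  ring

theorem X_pow_dvd_sub_mul_tangentTrianglePoly :
    X ^ 9 ∣ C (1 / 2) * (chordTangentPoly k₀ k₁ k₂ * tangentChordPoly k₀ k₁ k₂)
      - tangentTangentPoly k₀ k₁ k₂ * tangentTrianglePoly k₀ := by
  let c := (k₀ ^ 2 / 24 - k₂ / 2) / 30
  let d := (k₀ ^ 2 / 6 - k₂) / 120
  refine ⟨C (k₀ * k₁ / 1152) + C (k₀ ^ 3 / 11520 + k₁ ^ 2 / 4800 - k₀ * (c + d) / 48) * X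
    + C (k₀ ^ 2 * k₁ / 23040 - k₁ * (c / 120 + d / 80)) * X ^ 2
    + C (c * d / 2 - k₀ ^ 2 * d / 320) * X ^ 3, Polynomial.funext fun t => ?_⟩
  simp only [chordTangentPoly, tangentChordPoly, tangentTangentPoly, tangentTrianglePoly, eval_add,
    eval_sub, eval_mul, eval_pow, eval_X, eval_C, eval_one, c, d]
  ring

end Expansions

namespace IsAffineFrenet

variable {x v a : ℝ → ℝ × ℝ} {k : ℝ → ℝ} {s₀ k₀ k₁ k₂ : ℝ}

theorem hasExpansionAt_tangentTangent (h : IsAffineFrenet x v a k)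
    (hk : HasExpansionAt k (curvaturePoly k₀ k₁ k₂) s₀ 2) :
    HasExpansionAt (fun s => om (v s₀) (v s)) (tangentTangentPoly k₀ k₁ k₂) s₀ 5 := by
  refine HasExpansionAt.of_hill (m := 2) (j := 1) (χ := 0)
    (fun s => hasDerivAt_om_const_left (v s₀) (h.hasDerivAt_tangent s))
    (fun s => ?_) hk (dvd_mul_right _ _) ?_ ?_ (X_pow_dvd_hill_tangentTangentPoly k₀ k₁ k₂)
  · simpa only [om_smul_right, neg_mul, eval_zero, zero_sub] using
      hasDerivAt_om_const_left (v s₀) (h.hasDerivAt_normal s)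
  · simp [om_self, tangentTangentPoly]
  · simp [h.om_tangent_normal, tangentTangentPoly]

theorem hasExpansionAt_tangentChord (h : IsAffineFrenet x v a k)
    (hk : HasExpansionAt k (curvaturePoly k₀ k₁ k₂) s₀ 2) :
    HasExpansionAt (fun s => om (v s₀) (x s - x s₀)) (tangentChordPoly k₀ k₁ k₂) s₀ 6 := by
  refine HasExpansionAt.of_hasDerivAt
    (fun s => hasDerivAt_om_const_left (v s₀) ((h.hasDerivAt_curve s).sub_const (x s₀))) ?_ ?_
  · simp [om_zero_right, tangentChordPoly]
  · rw [derivative_tangentChordPoly]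
    exact h.hasExpansionAt_tangentTangent hk

theorem hasExpansionAt_chordTangent (h : IsAffineFrenet x v a k)
    (hk : HasExpansionAt k (curvaturePoly k₀ k₁ k₂) s₀ 2) :
    HasExpansionAt (fun s => om (x s - x s₀) (v s)) (chordTangentPoly k₀ k₁ k₂) s₀ 6 := by
  have hchord (s : ℝ) : HasDerivAt (fun t => x t - x s₀) (v s) s :=
    (h.hasDerivAt_curve s).sub_const (x s₀)
  refine HasExpansionAt.of_hill (m := 2) (j := 2) (χ := 1)
    (f' := fun s => om (x s - x s₀) (a s)) (fun s => ?_) (fun s => ?_) hk (dvd_mul_right _ _)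
    ?_ ?_ (X_pow_dvd_hill_chordTangentPoly k₀ k₁ k₂)
  · simpa only [om_self, zero_add] using hasDerivAt_om (hchord s) (h.hasDerivAt_tangent s)
  · simpa only [h.om_tangent_normal, om_smul_right, neg_mul, eval_one, ← sub_eq_add_neg] using
      hasDerivAt_om (hchord s) (h.hasDerivAt_normal s)
  · simp [om_zero_left, chordTangentPoly]
  · simp [om_zero_left, chordTangentPoly]

theorem tangentTriangle_sub_isLittleO (h : IsAffineFrenet x v a k)
    (hk : HasExpansionAt k (curvaturePoly k₀ k₁ k₂) s₀ 2) :
    (fun s => (1 / 2) * om (v s) (x s - x s₀) * om (v s₀) (x s₀ - x s) / om (v s₀) (v s)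
        - (tangentTrianglePoly k₀).eval (s - s₀))
      =o[𝓝[≠] s₀] fun s => (s - s₀) ^ 7 := by
  have hnum : HasExpansionAt
      (fun s => (1 / 2) * (om (x s - x s₀) (v s) * om (v s₀) (x s - x s₀)))
      (C (1 / 2) * (chordTangentPoly k₀ k₁ k₂ * tangentChordPoly k₀ k₁ k₂)) s₀ 8 :=
    (HasExpansionAt.mul (i := 2) (j := 2) (n := 4)
      (h.hasExpansionAt_chordTangent hk) (dvd_mul_right _ _)
      (h.hasExpansionAt_tangentChord hk) (dvd_mul_right _ _)).const_mul _
  refine (hnum.div_sub_isLittleO (i := 1) (j := 3) (n := 4) (τ := tangentTrianglePoly k₀)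
    (h.hasExpansionAt_tangentTangent hk) (by simp) (dvd_mul_right _ _)
    (X_pow_dvd_sub_mul_tangentTrianglePoly k₀ k₁ k₂)).congr_left fun s => ?_
  rw [← neg_om (v s), ← neg_om_sub_right (v s₀) (x s₀)]
  ring

end IsAffineFrenet

theorem stmt_8_general (x : ℝ → ℝ × ℝ) (hx : ContDiff ℝ 5 x)
    (haff : ∀ s : ℝ, om (deriv x s) (iteratedDeriv 2 x s) = 1)
    (k : ℝ → ℝ) (hk : ∀ s : ℝ, k s = om (iteratedDeriv 2 x s) (iteratedDeriv 3 x s))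
    (s₀ : ℝ) (T : ℝ → ℝ)
    (hT : ∀ s : ℝ, T s =
      (1 / 2) * om (deriv x s) (x s - x s₀) * om (deriv x s₀) (x s₀ - x s) /
        om (deriv x s₀) (deriv x s)) :
    (fun s : ℝ => T s - ((s - s₀) ^ 3 / 8 + 3 * (k s₀) ^ 2 / 5760 * (s - s₀) ^ 7))
      =o[𝓝[≠] s₀] fun s : ℝ => (s - s₀) ^ 7 := by
  obtain rfl : k = fun s => om (iteratedDeriv 2 x s) (iteratedDeriv 3 x s) := funext hk
  have hfrenet := isAffineFrenet_of_om_eq_one (hx.of_le (by norm_num)) haff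
  have hcurv := hasExpansionAt_curvaturePoly (contDiff_affineCurvature (n := 2) hx) s₀
  refine (hfrenet.tangentTriangle_sub_isLittleO hcurv).congr_left fun s => ?_
  simp only [hT, tangentTrianglePoly, eval_mul, eval_add, eval_pow, eval_X, eval_C]
  ring

theorem stmt_8 (x : ℝ → ℝ × ℝ) (hx : ContDiff ℝ (⊤ : ℕ∞) x)
    (haff : ∀ s : ℝ, om (deriv x s) (iteratedDeriv 2 x s) = 1)
    (k : ℝ → ℝ) (hk : ∀ s : ℝ, k s = om (iteratedDeriv 2 x s) (iteratedDeriv 3 x s))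
    (s₀ : ℝ) (T : ℝ → ℝ)
    (hT : ∀ s : ℝ, T s =
      (1 / 2) * om (deriv x s) (x s - x s₀) * om (deriv x s₀) (x s₀ - x s) /
        om (deriv x s₀) (deriv x s)) :
    (fun s : ℝ => T s - ((s - s₀) ^ 3 / 8 + 3 * (k s₀) ^ 2 / 5760 * (s - s₀) ^ 7))
      =o[𝓝[>] s₀] fun s : ℝ => (s - s₀) ^ 7 :=
  (stmt_8_general x (contDiff_infty.1 hx 5) haff k hk s₀ T hT).mono (nhdsGT_le_nhdsNE s₀)
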